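/- arXiv:1111.4445 — 4 statements merged into one kernel-verified Lean document; each statement's English description precedes it below -/
import Mathlib

section
/- Define the differential–difference operators φ₁, φ₂ : C¹([0,1],ℝⁿ) → C⁰([0,1],ℝⁿ) × ℝⁿ by φ₁(ζ) = (ζ̇ − T·A(t)·ζ, ζ(0) + ζ(1)) and φ₂(ζ) = (ζ̇ + T·A(t)ᵀ·ζ, ζ(0) + ζ(1)). Then for every ζ ∈ C¹([0,1],ℝⁿ): (i) ζ lies in the kernel of φ₁ if and only if the pair (ζ, ζ(0)) is orthogonal to φ₂(g) for every g ∈ C¹([0,1],ℝⁿ); and (ii) ζ lies in the kernel of φ₂ if and only if the pair (ζ, ζ(0)) is orthogonal to φ₁(g) for every g ∈ C¹([0,1],ℝⁿ). -/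
open Matrix Set

/-!
Integration by parts moves the operator from `g` onto `ζ`: the inner product of `(ζ, ζ(a))` with the
image of `g` becomes `-∫ ⟨r, g⟩ + ⟨c, g(b)⟩`, where `r` is the residual of the differential equation
for `ζ` and `c` is the residual of its boundary condition. If this vanishes for every `g`, then `g`
supported in the interior gives `r = 0`, and constant `g` then gives `c = 0`.
-/

theorem continuousOn_apply_graph {X Y Z : Type*} [TopologicalSpace X] [TopologicalSpace Y]
    [TopologicalSpace Z] {s : Set X} {B : X → Y → Z}
    (hB : ContinuousOn (fun p : X × Y ↦ B p.1 p.2) (s ×ˢ univ)) {u : X → Y}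
    (hu : ContinuousOn u s) : ContinuousOn (fun x ↦ B x (u x)) s :=
  hB.comp (continuousOn_id.prodMk hu) fun _ hx ↦ ⟨hx, mem_univ _⟩

section

open MeasureTheory
open scoped ContDiff

variable {E F G : Type*} [NormedAddCommGroup E] [NormedSpace ℝ E] [NormedAddCommGroup F]
  [NormedSpace ℝ F] [NormedAddCommGroup G] [NormedSpace ℝ G] [CompleteSpace G] {a b : ℝ}

theorem eqOn_zero_of_integral_contDiff_smul_eq_zero (hab : a < b) {f : ℝ → G}
    (hf : ContinuousOn f (Icc a b))
    (h : ∀ φ : ℝ → ℝ, ContDiff ℝ ∞ φ → tsupport φ ⊆ Ioo a b → ∫ t in a..b, φ t • f t = 0) :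
    EqOn f 0 (Icc a b) := by
  have ae_zero : ∀ᵐ t, t ∈ Ioo a b → f t = 0 := by
    refine isOpen_Ioo.ae_eq_zero_of_integral_contDiff_smul_eq_zero
      ((hf.mono Ioo_subset_Icc_self).locallyIntegrableOn measurableSet_Ioo) fun φ hφ _ hsupp ↦ ?_
    have support_subset : Function.support (fun t ↦ φ t • f t) ⊆ Ioc a b :=
      (Function.support_smul_subset_left φ f).trans <|
        (subset_tsupport φ).trans <| hsupp.trans Ioo_subset_Ioc_self
    rw [← intervalIntegral.integral_eq_integral_of_support_subset support_subset]
    exact h φ hφ hsupp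
  refine Measure.eqOn_Icc_of_ae_eq volume hab.ne ?_ hf continuousOn_const
  rw [← Measure.restrict_congr_set Ioo_ae_eq_Icc]
  exact (ae_restrict_iff' measurableSet_Ioo).2 ae_zero

variable (L : E →L[ℝ] F →L[ℝ] G)

theorem integral_bilinear_derivWithin_add_eq_sub (hab : a < b) {u : ℝ → E} {v : ℝ → F}
    (hu : ContDiffOn ℝ 1 u (Icc a b)) (hv : ContDiffOn ℝ 1 v (Icc a b)) :
    ∫ t in a..b, (L (u t) (derivWithin v (Icc a b) t) + L (derivWithin u (Icc a b) t) (v t)) =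
      L (u b) (v b) - L (u a) (v a) := by
  have hu' := hu.continuousOn_derivWithin (uniqueDiffOn_Icc hab) le_rfl
  have hv' := hv.continuousOn_derivWithin (uniqueDiffOn_Icc hab) le_rfl
  have hu_cont := hu.continuousOn
  have hv_cont := hv.continuousOn
  refine intervalIntegral.integral_eq_sub_of_hasDerivAt_of_le (f := fun t ↦ L (u t) (v t)) hab.le
    (by fun_prop) (fun t ht ↦ ?_)
    (ContinuousOn.intervalIntegrable_of_Icc hab.le (by fun_prop))
  have hnhds : Icc a b ∈ nhds t := Icc_mem_nhds ht.1 ht.2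
  have htI := Ioo_subset_Icc_self ht
  exact L.hasDerivAt_of_bilinear
    (fun _ ↦ (hu.differentiableOn one_ne_zero t htI).hasDerivWithinAt.hasDerivAt hnhds)
    (fun _ ↦ (hv.differentiableOn one_ne_zero t htI).hasDerivWithinAt.hasDerivAt hnhds)

theorem integral_derivWithin_add_adjoint_add_boundary_eq (hab : a < b)
    {B : ℝ → E → E} {B' : ℝ → F → F} {C : E → E} {C' : F → F}
    (hB' : ContinuousOn (fun p : ℝ × F ↦ B' p.1 p.2) (Icc a b ×ˢ univ))
    (hadj : ∀ t ∈ Icc a b, ∀ x y, L (B t x) y = L x (B' t y))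
    (hC : ∀ x y, L (C x) y = L x (C' y))
    {u : ℝ → E} {v : ℝ → F}
    (hu : ContDiffOn ℝ 1 u (Icc a b)) (hv : ContDiffOn ℝ 1 v (Icc a b)) :
    (∫ t in a..b, L (u t) (derivWithin v (Icc a b) t + B' t (v t))) + L (u a) (v a + C' (v b)) =
      L (C (u a) + u b) (v b) -
        ∫ t in a..b, L (derivWithin u (Icc a b) t - B t (u t)) (v t) := by
  have hu' := hu.continuousOn_derivWithin (uniqueDiffOn_Icc hab) le_rfl
  have hv' := hv.continuousOn_derivWithin (uniqueDiffOn_Icc hab) le_rfl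
  have hu_cont := hu.continuousOn
  have hv_cont := hv.continuousOn
  have hB'v : ContinuousOn (fun t ↦ L (u t) (B' t (v t))) (Icc a b) :=
    (L.continuous.comp_continuousOn hu.continuousOn).clm_apply
      (continuousOn_apply_graph hB' hv.continuousOn)
  have adjoint_integral : ∫ t in a..b, L (derivWithin u (Icc a b) t - B t (u t)) (v t) =
      ∫ t in a..b, (L (derivWithin u (Icc a b) t) (v t) - L (u t) (B' t (v t))) := by
    refine intervalIntegral.integral_congr fun t ht ↦ ?_
    rw [uIcc_of_le hab.le] at ht
    simp only [map_sub, _root_.sub_apply, hadj t ht]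
  have sum_eq := integral_bilinear_derivWithin_add_eq_sub L hab hu hv
  have integrable {w : ℝ → G} (hw : ContinuousOn w (Icc a b)) : IntervalIntegrable w volume a b :=
    hw.intervalIntegrable_of_Icc hab.le
  simp only [adjoint_integral, map_add, _root_.add_apply, hC]
  rw [intervalIntegral.integral_add (integrable (by fun_prop)) (integrable (by fun_prop))] at sum_eq
  rw [intervalIntegral.integral_add (integrable (by fun_prop)) (integrable hB'v),
    intervalIntegral.integral_sub (integrable (by fun_prop)) (integrable hB'v)]
  linear_combination (norm := module) sum_eq

variable {L}

theorem forall_boundary_sub_integral_eq_zero_iff (hL : Function.Injective L) (hab : a < b)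
    {r : ℝ → E} (hr : ContinuousOn r (Icc a b)) {c : E} :
    (∀ g : ℝ → F, ContDiffOn ℝ 1 g (Icc a b) → L c (g b) - ∫ t in a..b, L (r t) (g t) = 0) ↔
      EqOn r 0 (Icc a b) ∧ c = 0 := by
  have integral_zero (hr₀ : EqOn r 0 (Icc a b)) (g : ℝ → F) : ∫ t in a..b, L (r t) (g t) = 0 := by
    rw [intervalIntegral.integral_congr (g := 0), Pi.zero_def, intervalIntegral.integral_zero]
    intro t ht
    rw [uIcc_of_le hab.le] at ht
    simp only [hr₀ ht, Pi.zero_apply, map_zero, _root_.zero_apply]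
  constructor
  · intro h
    have hr₀ : EqOn r 0 (Icc a b) := by
      suffices ∀ y, EqOn (fun t ↦ L (r t) y) 0 (Icc a b) from fun t ht ↦
        (map_eq_zero_iff L hL).1 <| ContinuousLinearMap.ext fun y ↦ this y ht
      refine fun y ↦ eqOn_zero_of_integral_contDiff_smul_eq_zero hab (by fun_prop)
        fun φ hφ hsupp ↦ ?_
      have hφb : φ b = 0 := image_eq_zero_of_notMem_tsupport fun hb ↦ (hsupp hb).2.ne rfl
      have hφ₁ : ContDiff ℝ 1 φ := hφ.of_le (mod_cast le_top)
      simpa [hφb] using h (fun t ↦ φ t • y) (hφ₁.smul contDiff_const).contDiffOn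
    refine ⟨hr₀, (map_eq_zero_iff L hL).1 <| ContinuousLinearMap.ext fun y ↦ ?_⟩
    simpa [integral_zero hr₀] using h (fun _ ↦ y) contDiffOn_const
  · rintro ⟨hr₀, rfl⟩ g -
    simp [integral_zero hr₀]

theorem kernel_orthogonality_antiperiodic_general (hL : Function.Injective L) (hab : a < b)
    {B : ℝ → E → E} {B' : ℝ → F → F} {C : E → E} {C' : F → F}
    (hB : ContinuousOn (fun p : ℝ × E ↦ B p.1 p.2) (Icc a b ×ˢ univ))
    (hB' : ContinuousOn (fun p : ℝ × F ↦ B' p.1 p.2) (Icc a b ×ˢ univ))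
    (hadj : ∀ t ∈ Icc a b, ∀ x y, L (B t x) y = L x (B' t y))
    (hC : ∀ x y, L (C x) y = L x (C' y))
    {u : ℝ → E} (hu : ContDiffOn ℝ 1 u (Icc a b)) :
    ((∀ t ∈ Icc a b, derivWithin u (Icc a b) t - B t (u t) = 0) ∧ C (u a) + u b = 0) ↔
      ∀ g : ℝ → F, ContDiffOn ℝ 1 g (Icc a b) →
        (∫ t in a..b, L (u t) (derivWithin g (Icc a b) t + B' t (g t))) +
          L (u a) (g a + C' (g b)) = 0 := by
  have residual_continuous :
      ContinuousOn (fun t ↦ derivWithin u (Icc a b) t - B t (u t)) (Icc a b) :=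
    (hu.continuousOn_derivWithin (uniqueDiffOn_Icc hab) le_rfl).sub
      (continuousOn_apply_graph hB hu.continuousOn)
  refine (forall_boundary_sub_integral_eq_zero_iff hL hab residual_continuous).symm.trans <|
    forall₂_congr fun g hg ↦ ?_
  rw [integral_derivWithin_add_adjoint_add_boundary_eq L hab hB' hadj hC hu hg]

end

/-- The dot product on `ι → ℝ` as a continuous bilinear form. -/
noncomputable def dotProductBilinCLM (ι : Type*) [Fintype ι] [DecidableEq ι] :
    (ι → ℝ) →L[ℝ] (ι → ℝ) →L[ℝ] ℝ :=
  (dotProductEquiv ℝ ι).toLinearMap.toContinuousBilinearMap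

theorem injective_dotProductBilinCLM (ι : Type*) [Fintype ι] [DecidableEq ι] :
    Function.Injective (dotProductBilinCLM ι) := fun _ _ h ↦
  (dotProductEquiv ℝ ι).injective <| LinearMap.ext fun y ↦ DFunLike.congr_fun h y

theorem continuousOn_mulVec_prod {X R m n : Type*} [TopologicalSpace X] [TopologicalSpace R]
    [NonUnitalNonAssocSemiring R] [ContinuousAdd R] [ContinuousMul R] [Fintype n] {s : Set X}
    {M : X → Matrix m n R} (hM : ContinuousOn M s) :
    ContinuousOn (fun p : X × (n → R) ↦ M p.1 *ᵥ p.2) (s ×ˢ univ) :=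
  (continuous_fst.matrix_mulVec continuous_snd :
    Continuous fun q : Matrix m n R × (n → R) ↦ q.1 *ᵥ q.2).comp_continuousOn <|
      (hM.comp continuousOn_fst fun _ hp ↦ hp.1).prodMk continuousOn_snd

theorem mulVec_kernel_iff_orthogonal {ι : Type*} [Fintype ι] {a b : ℝ} (hab : a < b)
    {M : ℝ → Matrix ι ι ℝ} (hM : ContinuousOn M (Icc a b))
    {ζ : ℝ → ι → ℝ} (hζ : ContDiffOn ℝ 1 ζ (Icc a b)) :
    ((∀ t ∈ Icc a b, derivWithin ζ (Icc a b) t - M t *ᵥ ζ t = 0) ∧ ζ a + ζ b = 0) ↔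
      ∀ g : ℝ → ι → ℝ, ContDiffOn ℝ 1 g (Icc a b) →
        (∫ t in a..b, ζ t ⬝ᵥ (derivWithin g (Icc a b) t + (M t)ᵀ *ᵥ g t)) +
          ζ a ⬝ᵥ (g a + g b) = 0 := by
  classical
  exact kernel_orthogonality_antiperiodic_general (injective_dotProductBilinCLM ι) hab (C := id)
    (C' := id) (continuousOn_mulVec_prod hM)
    (continuousOn_mulVec_prod (continuous_id.matrix_transpose.comp_continuousOn hM))
    (fun t _ x y ↦ by
      change (M t *ᵥ x) ⬝ᵥ y = x ⬝ᵥ (M t)ᵀ *ᵥ y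
      rw [dotProduct_mulVec, vecMul_transpose])
    (fun _ _ ↦ rfl) hζ

/-- Proposition 2 of the paper: the real differential–difference operators
`φ₁(ζ) = (ζ̇ − T·A(t)·ζ, ζ(0) + ζ(1))` and `φ₂(ζ) = (ζ̇ + T·A(t)ᵀ·ζ, ζ(0) + ζ(1))`
on `C¹([0,1],ℝⁿ)` satisfy: `ζ ∈ Ker φ₁` iff `(ζ, ζ(0))` is orthogonal to the range
of `φ₂`, and `ζ ∈ Ker φ₂` iff `(ζ, ζ(0))` is orthogonal to the range of `φ₁`. -/
theorem kernel_orthogonality_antiperiodic (n : ℕ) (T : ℝ) (hT : 0 < T)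
    (A : ℝ → Matrix (Fin n) (Fin n) ℝ) (hA : ContinuousOn A (Icc 0 1))
    (ζ : ℝ → Fin n → ℝ) (hζ : ContDiffOn ℝ 1 ζ (Icc 0 1)) :
    ((((∀ t ∈ Icc (0:ℝ) 1, derivWithin ζ (Icc 0 1) t - T • (A t *ᵥ ζ t) = 0) ∧
        ζ 0 + ζ 1 = 0) ↔
      ∀ g : ℝ → Fin n → ℝ, ContDiffOn ℝ 1 g (Icc 0 1) →
        (∫ t in (0:ℝ)..1,
            ζ t ⬝ᵥ (derivWithin g (Icc 0 1) t + T • ((A t)ᵀ *ᵥ g t))) +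
          ζ 0 ⬝ᵥ (g 0 + g 1) = 0) ∧
     (((∀ t ∈ Icc (0:ℝ) 1, derivWithin ζ (Icc 0 1) t + T • ((A t)ᵀ *ᵥ ζ t) = 0) ∧
        ζ 0 + ζ 1 = 0) ↔
      ∀ g : ℝ → Fin n → ℝ, ContDiffOn ℝ 1 g (Icc 0 1) →
        (∫ t in (0:ℝ)..1,
            ζ t ⬝ᵥ (derivWithin g (Icc 0 1) t - T • (A t *ᵥ g t))) +
          ζ 0 ⬝ᵥ (g 0 + g 1) = 0)) := by
  have hAt : ContinuousOn (fun t ↦ (A t)ᵀ) (Icc 0 1) :=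
    continuous_id.matrix_transpose.comp_continuousOn hA
  constructor
  · simpa only [transpose_smul, smul_mulVec] using
      mulVec_kernel_iff_orthogonal (M := fun t ↦ T • A t) zero_lt_one (hA.const_smul T) hζ
  · simpa only [transpose_smul, transpose_transpose, smul_mulVec, neg_smul, transpose_neg,
      neg_mulVec, sub_neg_eq_add, ← sub_eq_add_neg] using 
        mulVec_kernel_iff_orthogonal (M := fun t ↦ -T • (A t)ᵀ) zero_lt_one (hAt.const_smul (-T)) hζ
end

section
/- Let θ ∈ ℝ. Define the differential–difference operators φ₁, φ₂ : C¹([0,1],ℂⁿ) → C⁰([0,1],ℂⁿ) × ℂⁿ by φ₁(ζ) = (ζ̇ − T·A(t)·ζ, ζ(0) − e^{−iθ}·ζ(1)) and φ₂(ζ) = (ζ̇ + T·A(t)ᵀ·ζ, ζ(0) − e^{−iθ}·ζ(1)). Then for every ζ ∈ C¹([0,1],ℂⁿ): (i) ζ lies in the kernel of φ₁ if and only if the pair (ζ, ζ(0)) is orthogonal to φ₂(g) for every g ∈ C¹([0,1],ℂⁿ); and (ii) ζ lies in the kernel of φ₂ if and only if the pair (ζ, ζ(0)) is orthogonal to φ₁(g)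 for every g ∈ C¹([0,1],ℂⁿ). -/
open Matrix Set Complex

/-!
Integration by parts turns the pairing of `(u, u a)` with the image of `g` under the operator with
coefficients `-Bᴴ` and `M` into `⟨u b - Mᴴ u a, g b⟩ - ∫ ⟨u' - B u, g⟩`. Test functions `g`
supported in `(a, b)` therefore detect the differential equation `u' = B u`, and constant ones then
detect the condition `u b = Mᴴ u a`, which for unitary `M` is the boundary condition `u a = M u b`
itself.
-/

open MeasureTheory
open scoped ContDiff

section TestFunctions

variable {a b : ℝ}

lemma eqOn_zero_Icc_of_integral_contDiff_smul_eq_zero {E : Type*} [NormedAddCommGroup E]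
    [NormedSpace ℝ E] [CompleteSpace E] (hab : a < b) {f : ℝ → E} (hf : ContinuousOn f (Icc a b))
    (h : ∀ φ : ℝ → ℝ, ContDiff ℝ ∞ φ → tsupport φ ⊆ Ioo a b → ∫ t in a..b, φ t • f t = 0) :
    EqOn f 0 (Icc a b) := by
  have ae_zero : ∀ᵐ t, t ∈ Ioo a b → f t = 0 := by
    refine isOpen_Ioo.ae_eq_zero_of_integral_contDiff_smul_eq_zero
      ((hf.mono Ioo_subset_Icc_self).locallyIntegrableOn measurableSet_Ioo) fun φ hφ _ hsupp => ?_
    have support_subset : Function.support (fun t => φ t • f t) ⊆ Ioc a b :=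
      (Function.support_smul_subset_left φ f).trans <|
        (subset_tsupport φ).trans <| hsupp.trans Ioo_subset_Ioc_self
    rw [← intervalIntegral.integral_eq_integral_of_support_subset support_subset, h φ hφ hsupp]
  refine Measure.eqOn_Icc_of_ae_eq volume hab.ne ?_ hf continuousOn_const
  rw [← restrict_Ioo_eq_restrict_Icc]
  exact (ae_restrict_iff' measurableSet_Ioo).mpr ae_zero

variable {𝕜 ι : Type*} [RCLike 𝕜] [Fintype ι]

lemma eqOn_zero_Icc_of_integral_star_dotProduct_contDiff_eq_zero (hab : a < b) {w : ℝ → ι → 𝕜}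
    (hw : ContinuousOn w (Icc a b))
    (h : ∀ g : ℝ → ι → 𝕜, ContDiff ℝ ∞ g → tsupport g ⊆ Ioo a b →
      ∫ t in a..b, star (w t) ⬝ᵥ g t = 0) :
    EqOn w 0 (Icc a b) := by
  classical
  intro t ht
  ext i
  have hwi : ContinuousOn (fun s => star (w s i)) (Icc a b) := (continuousOn_pi.mp hw i).star
  refine star_eq_zero.mp
    (eqOn_zero_Icc_of_integral_contDiff_smul_eq_zero hab hwi (fun φ hφ hsupp => ?_) ht)
  have smooth : ContDiff ℝ ∞ fun s => φ s • (Pi.single i 1 : ι → 𝕜) := hφ.smul contDiff_const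
  have support_subset : tsupport (fun s => φ s • (Pi.single i 1 : ι → 𝕜)) ⊆ Ioo a b :=
    (tsupport_smul_subset_left φ _).trans hsupp
  simpa only [dotProduct_smul, dotProduct_single_one, Pi.star_apply] using
    h _ smooth support_subset

end TestFunctions

section Matrices

lemma continuousOn_mulVec {X R m n : Type*} [TopologicalSpace X] [NonUnitalNonAssocSemiring R]
    [TopologicalSpace R] [ContinuousAdd R] [ContinuousMul R] [Fintype n] {s : Set X}
    {B : X → Matrix m n R} {u : X → n → R} (hB : ContinuousOn B s) (hu : ContinuousOn u s) :
    ContinuousOn (fun t => B t *ᵥ u t) s :=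
  (continuous_fst.matrix_mulVec continuous_snd).comp_continuousOn (hB.prodMk hu)

lemma star_dotProduct_conjTranspose_mulVec {R m n : Type*} [NonUnitalSemiring R] [StarRing R]
    [Fintype m] [Fintype n] (C : Matrix m n R) (v : n → R) (w : m → R) :
    star v ⬝ᵥ (Cᴴ *ᵥ w) = star (C *ᵥ v) ⬝ᵥ w := by
  rw [star_mulVec, dotProduct_mulVec]

lemma eq_mulVec_iff_of_mem_unitaryGroup {R n : Type*} [CommRing R] [StarRing R] [Fintype n]
    [DecidableEq n] {M : Matrix n n R} (hM : M ∈ unitaryGroup n R) {v w : n → R} :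
    v = M *ᵥ w ↔ w = Mᴴ *ᵥ v := by
  constructor
  · rintro rfl
    rw [mulVec_mulVec, ← star_eq_conjTranspose, Unitary.star_mul_self_of_mem hM, one_mulVec]
  · rintro rfl
    rw [mulVec_mulVec, ← star_eq_conjTranspose, Unitary.mul_star_self_of_mem hM, one_mulVec]

end Matrices

section Calculus

variable {a b : ℝ}

section Derivative

variable {E : Type*} [NormedAddCommGroup E] [NormedSpace ℝ E]

lemma hasDerivAt_derivWithin_Icc {g : ℝ → E} (hg : DifferentiableOn ℝ g (Icc a b)) {t : ℝ}
    (ht : t ∈ Ioo a b) : HasDerivAt g (derivWithin g (Icc a b) t) t :=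
  (hg t (Ioo_subset_Icc_self ht)).hasDerivWithinAt.hasDerivAt (Icc_mem_nhds ht.1 ht.2)

lemma continuousOn_derivWithin_Icc (hab : a < b) {g : ℝ → E} (hg : ContDiffOn ℝ 1 g (Icc a b)) :
    ContinuousOn (derivWithin g (Icc a b)) (Icc a b) :=
  hg.continuousOn_derivWithin (uniqueDiffOn_Icc hab) le_rfl

end Derivative

variable {𝕜 ι : Type*} [RCLike 𝕜] [Fintype ι]

lemma continuousOn_star_dotProduct {X : Type*} [TopologicalSpace X] {s : Set X} {u v : X → ι → 𝕜}
    (hu : ContinuousOn u s) (hv : ContinuousOn v s) :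
    ContinuousOn (fun t => star (u t) ⬝ᵥ v t) s := by
  have continuous_form : Continuous fun p : (ι → 𝕜) × (ι → 𝕜) => star p.1 ⬝ᵥ p.2 :=
    continuous_fst.star.dotProduct continuous_snd
  exact continuous_form.comp_continuousOn (hu.prodMk hv)

lemma intervalIntegrable_star_dotProduct (hab : a ≤ b) {u v : ℝ → ι → 𝕜}
    (hu : ContinuousOn u (Icc a b)) (hv : ContinuousOn v (Icc a b)) :
    IntervalIntegrable (fun t => star (u t) ⬝ᵥ v t) volume a b :=
  (continuousOn_star_dotProduct hu hv).intervalIntegrable_of_Icc hab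

lemma hasDerivAt_star_dotProduct {u v : ℝ → ι → 𝕜} {u' v' : ι → 𝕜} {t : ℝ}
    (hu : HasDerivAt u u' t) (hv : HasDerivAt v v' t) :
    HasDerivAt (fun s => star (u s) ⬝ᵥ v s) (star u' ⬝ᵥ v t + star (u t) ⬝ᵥ v') t := by
  simp only [dotProduct, ← Finset.sum_add_distrib]
  exact HasDerivAt.fun_sum fun i _ => (hasDerivAt_pi.mp hu i).star.mul (hasDerivAt_pi.mp hv i)

lemma integral_star_dotProduct_derivWithin (hab : a < b) {u v : ℝ → ι → 𝕜}
    (hu : ContDiffOn ℝ 1 u (Icc a b)) (hv : ContDiffOn ℝ 1 v (Icc a b)) :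
    ∫ t in a..b, star (u t) ⬝ᵥ derivWithin v (Icc a b) t =
      star (u b) ⬝ᵥ v b - star (u a) ⬝ᵥ v a -
        ∫ t in a..b, star (derivWithin u (Icc a b) t) ⬝ᵥ v t := by
  have integrable_left := intervalIntegrable_star_dotProduct hab.le
    (continuousOn_derivWithin_Icc hab hu) hv.continuousOn
  have integrable_right := intervalIntegrable_star_dotProduct hab.le
    hu.continuousOn (continuousOn_derivWithin_Icc hab hv)
  rw [eq_sub_iff_add_eq', ← intervalIntegral.integral_add integrable_left integrable_right]
  exact intervalIntegral.integral_eq_sub_of_hasDerivAt_of_le hab.le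
    (continuousOn_star_dotProduct hu.continuousOn hv.continuousOn)
    (fun t ht => hasDerivAt_star_dotProduct
      (hasDerivAt_derivWithin_Icc (hu.differentiableOn one_ne_zero) ht)
      (hasDerivAt_derivWithin_Icc (hv.differentiableOn one_ne_zero) ht))
    (integrable_left.add integrable_right)

end Calculus

section Operators

variable {𝕜 ι : Type*} [RCLike 𝕜] [Fintype ι] {a b : ℝ}

/-- The Floquet operator `g ↦ (g' - B g, g a - M (g b))` on curves `g : [a, b] → 𝕜^ι`. Its kernel
consists of the solutions of `g' = B g` satisfying the quasi-periodicity condition `g a = M (g b)`.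
The first component is meaningful on `[a, b]` only. -/
noncomputable def floquetOperator (a b : ℝ) (B : ℝ → Matrix ι ι 𝕜) (M : Matrix ι ι 𝕜)
    (g : ℝ → ι → 𝕜) : (ℝ → ι → 𝕜) × (ι → 𝕜) :=
  (fun t => derivWithin g (Icc a b) t - B t *ᵥ g t, g a - M *ᵥ g b)

/-- The Hermitian inner product of `C⁰([a, b], 𝕜^ι) × 𝕜^ι`, conjugate-linear in the first argument;
orthogonality of a curve with its initial value to the range of a Floquet operator refers to it. -/
noncomputable def curvePairInner (a b : ℝ) (p q : (ℝ → ι → 𝕜) × (ι → 𝕜)) : 𝕜 :=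
  (∫ t in a..b, star (p.1 t) ⬝ᵥ q.1 t) + star p.2 ⬝ᵥ q.2

lemma continuousOn_floquetOperator_fst (hab : a < b) {B : ℝ → Matrix ι ι 𝕜}
    (hB : ContinuousOn B (Icc a b)) (M : Matrix ι ι 𝕜) {u : ℝ → ι → 𝕜}
    (hu : ContDiffOn ℝ 1 u (Icc a b)) :
    ContinuousOn (floquetOperator a b B M u).1 (Icc a b) :=
  (continuousOn_derivWithin_Icc hab hu).sub (continuousOn_mulVec hB hu.continuousOn)

lemma curvePairInner_floquetOperator (hab : a < b) {B : ℝ → Matrix ι ι 𝕜}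
    (hB : ContinuousOn B (Icc a b)) (M : Matrix ι ι 𝕜) {u g : ℝ → ι → 𝕜}
    (hu : ContDiffOn ℝ 1 u (Icc a b)) (hg : ContDiffOn ℝ 1 g (Icc a b)) :
    curvePairInner a b (u, u a) (floquetOperator a b (fun t => -(B t)ᴴ) M g) =
      star (u b - Mᴴ *ᵥ u a) ⬝ᵥ g b -
        ∫ t in a..b, star ((floquetOperator a b B M u).1 t) ⬝ᵥ g t := by
  have hBu := continuousOn_mulVec hB hu.continuousOn
  have hu' := continuousOn_derivWithin_Icc hab hu
  have hg' := continuousOn_derivWithin_Icc hab hg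
  have interior : ∫ t in a..b, star (u t) ⬝ᵥ (derivWithin g (Icc a b) t - -(B t)ᴴ *ᵥ g t) =
      (star (u b) ⬝ᵥ g b - star (u a) ⬝ᵥ g a) -
        ∫ t in a..b, star (derivWithin u (Icc a b) t - B t *ᵥ u t) ⬝ᵥ g t := by
    simp only [neg_mulVec, sub_neg_eq_add, dotProduct_add, star_sub, sub_dotProduct,
      star_dotProduct_conjTranspose_mulVec]
    rw [intervalIntegral.integral_add
        (intervalIntegrable_star_dotProduct hab.le hu.continuousOn hg')
        (intervalIntegrable_star_dotProduct hab.le hBu hg.continuousOn),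
      intervalIntegral.integral_sub
        (intervalIntegrable_star_dotProduct hab.le hu' hg.continuousOn)
        (intervalIntegrable_star_dotProduct hab.le hBu hg.continuousOn),
      integral_star_dotProduct_derivWithin hab hu hg]
    ring
  have boundary : star (u a) ⬝ᵥ (g a - M *ᵥ g b) =
      star (u a) ⬝ᵥ g a - star (Mᴴ *ᵥ u a) ⬝ᵥ g b := by
    rw [dotProduct_sub, ← star_dotProduct_conjTranspose_mulVec, conjTranspose_conjTranspose]
  simp only [curvePairInner, floquetOperator]
  rw [interior, boundary, star_sub, sub_dotProduct]
  ring

lemma orthogonal_range_floquetOperator_iff (hab : a < b) {B : ℝ → Matrix ι ι 𝕜}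
    (hB : ContinuousOn B (Icc a b)) (M : Matrix ι ι 𝕜) {u : ℝ → ι → 𝕜}
    (hu : ContDiffOn ℝ 1 u (Icc a b)) :
    (∀ g : ℝ → ι → 𝕜, ContDiffOn ℝ 1 g (Icc a b) →
      curvePairInner a b (u, u a) (floquetOperator a b (fun t => -(B t)ᴴ) M g) = 0) ↔
    (∀ t ∈ Icc a b, (floquetOperator a b B M u).1 t = 0) ∧ u b = Mᴴ *ᵥ u a := by
  have integral_eq_zero (h : ∀ t ∈ Icc a b, (floquetOperator a b B M u).1 t = 0)
      (g : ℝ → ι → 𝕜) : ∫ t in a..b, star ((floquetOperator a b B M u).1 t) ⬝ᵥ g t = 0 := by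
    refine intervalIntegral.integral_zero_ae <| .of_forall fun t ht => ?_
    rw [uIoc_of_le hab.le] at ht
    rw [h t (Ioc_subset_Icc_self ht), star_zero, zero_dotProduct]
  constructor
  · intro orthogonal
    have ode : ∀ t ∈ Icc a b, (floquetOperator a b B M u).1 t = 0 := by
      refine eqOn_zero_Icc_of_integral_star_dotProduct_contDiff_eq_zero hab
        (continuousOn_floquetOperator_fst hab hB M hu) fun g hg hsupp => ?_
      have g_contDiffOn : ContDiffOn ℝ 1 g (Icc a b) := (hg.of_le (mod_cast le_top)).contDiffOn
      have g_right : g b = 0 :=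
        image_eq_zero_of_notMem_tsupport fun hb => (hsupp hb).2.false
      have pairing_eq_zero := orthogonal g g_contDiffOn
      rwa [curvePairInner_floquetOperator hab hB M hu g_contDiffOn, g_right, dotProduct_zero,
        zero_sub, neg_eq_zero] at pairing_eq_zero
    refine ⟨ode, sub_eq_zero.mp (star_eq_zero.mp (dotProduct_eq_zero _ fun v => ?_))⟩
    have pairing_eq_zero := orthogonal (fun _ => v) contDiffOn_const
    rwa [curvePairInner_floquetOperator hab hB M hu contDiffOn_const, integral_eq_zero ode,
      sub_zero] at pairing_eq_zero
  · rintro ⟨ode, boundary⟩ g hg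
    rw [curvePairInner_floquetOperator hab hB M hu hg, integral_eq_zero ode, boundary, sub_self,
      star_zero, zero_dotProduct, sub_zero]

variable [DecidableEq ι]

lemma floquetOperator_eq_zero_iff_orthogonal_range (hab : a < b) {B : ℝ → Matrix ι ι 𝕜}
    (hB : ContinuousOn B (Icc a b)) {M : Matrix ι ι 𝕜} (hM : M ∈ unitaryGroup ι 𝕜)
    {u : ℝ → ι → 𝕜} (hu : ContDiffOn ℝ 1 u (Icc a b)) :
    ((∀ t ∈ Icc a b, (floquetOperator a b B M u).1 t = 0) ∧ (floquetOperator a b B M u).2 = 0) ↔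
      ∀ g : ℝ → ι → 𝕜, ContDiffOn ℝ 1 g (Icc a b) →
        curvePairInner a b (u, u a) (floquetOperator a b (fun t => -(B t)ᴴ) M g) = 0 := by
  rw [orthogonal_range_floquetOperator_iff hab hB M hu,
    ← eq_mulVec_iff_of_mem_unitaryGroup hM, ← sub_eq_zero (b := M *ᵥ u b)]
  rfl

theorem kernel_orthogonality_floquet_complex_general (hab : a < b) {B : ℝ → Matrix ι ι 𝕜}
    (hB : ContinuousOn B (Icc a b)) {M : Matrix ι ι 𝕜} (hM : M ∈ unitaryGroup ι 𝕜)
    {u : ℝ → ι → 𝕜} (hu : ContDiffOn ℝ 1 u (Icc a b)) :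
    (((∀ t ∈ Icc a b, (floquetOperator a b B M u).1 t = 0) ∧ (floquetOperator a b B M u).2 = 0) ↔
      ∀ g : ℝ → ι → 𝕜, ContDiffOn ℝ 1 g (Icc a b) →
        curvePairInner a b (u, u a) (floquetOperator a b (fun t => -(B t)ᴴ) M g) = 0) ∧
    (((∀ t ∈ Icc a b, (floquetOperator a b (fun t => -(B t)ᴴ) M u).1 t = 0) ∧
        (floquetOperator a b (fun t => -(B t)ᴴ) M u).2 = 0) ↔
      ∀ g : ℝ → ι → 𝕜, ContDiffOn ℝ 1 g (Icc a b) →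
        curvePairInner a b (u, u a) (floquetOperator a b B M g) = 0) := by
  have adjoint_continuousOn : ContinuousOn (fun t => -(B t)ᴴ) (Icc a b) :=
    (continuous_id.matrix_conjTranspose.comp_continuousOn hB).neg
  refine ⟨floquetOperator_eq_zero_iff_orthogonal_range hab hB hM hu, ?_⟩
  simpa only [conjTranspose_neg, conjTranspose_conjTranspose, neg_neg] using
    floquetOperator_eq_zero_iff_orthogonal_range hab adjoint_continuousOn hM hu

end Operators

lemma exp_neg_ofReal_mul_I_mem_unitary (θ : ℝ) :
    Complex.exp (-(θ : ℂ) * Complex.I) ∈ unitary ℂ := by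
  rw [Unitary.mem_iff_self_mul_star, star_def, ← Complex.exp_conj, ← Complex.exp_add]
  simp

lemma conjTranspose_ofReal_smul_map_ofReal {m n : Type*} (T : ℝ) (A : Matrix m n ℝ) :
    ((T : ℂ) • A.map (fun r => (r : ℂ)))ᴴ = (T : ℂ) • Aᵀ.map (fun r => (r : ℂ)) := by
  ext i j
  simp

/-- Proposition 6 of the paper: the complex differential–difference operators
`φ₁(ζ) = (ζ̇ − T·A(t)·ζ, ζ(0) − e^{−iθ}·ζ(1))` and
`φ₂(ζ) = (ζ̇ + T·A(t)ᵀ·ζ, ζ(0) − e^{−iθ}·ζ(1))` on `C¹([0,1],ℂⁿ)` satisfy: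
`ζ ∈ Ker φ₁` iff `(ζ, ζ(0))` is orthogonal (for the Hermitian inner product,
conjugate-linear in the first argument) to the range of `φ₂`, and `ζ ∈ Ker φ₂`
iff `(ζ, ζ(0))` is orthogonal to the range of `φ₁`. -/
theorem kernel_orthogonality_floquet_complex (n : ℕ) (T : ℝ) (hT : 0 < T) (θ : ℝ)
    (A : ℝ → Matrix (Fin n) (Fin n) ℝ) (hA : ContinuousOn A (Icc 0 1))
    (ζ : ℝ → Fin n → ℂ) (hζ : ContDiffOn ℝ 1 ζ (Icc 0 1)) :
    ((((∀ t ∈ Icc (0:ℝ) 1,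
          derivWithin ζ (Icc 0 1) t - (T : ℂ) • ((A t).map (fun r => (r : ℂ)) *ᵥ ζ t) = 0) ∧
        ζ 0 - Complex.exp (-(θ : ℂ) * Complex.I) • ζ 1 = 0) ↔
      ∀ g : ℝ → Fin n → ℂ, ContDiffOn ℝ 1 g (Icc 0 1) →
        (∫ t in (0:ℝ)..1,
            star (ζ t) ⬝ᵥ (derivWithin g (Icc 0 1) t
              + (T : ℂ) • ((A t)ᵀ.map (fun r => (r : ℂ)) *ᵥ g t))) +
          star (ζ 0) ⬝ᵥ (g 0 - Complex.exp (-(θ : ℂ) * Complex.I) • g 1) = 0) ∧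
     (((∀ t ∈ Icc (0:ℝ) 1,
          derivWithin ζ (Icc 0 1) t + (T : ℂ) • ((A t)ᵀ.map (fun r => (r : ℂ)) *ᵥ ζ t) = 0) ∧
        ζ 0 - Complex.exp (-(θ : ℂ) * Complex.I) • ζ 1 = 0) ↔
      ∀ g : ℝ → Fin n → ℂ, ContDiffOn ℝ 1 g (Icc 0 1) →
        (∫ t in (0:ℝ)..1,
            star (ζ t) ⬝ᵥ (derivWithin g (Icc 0 1) t
              - (T : ℂ) • ((A t).map (fun r => (r : ℂ)) *ᵥ g t))) +
          star (ζ 0) ⬝ᵥ (g 0 - Complex.exp (-(θ : ℂ) * Complex.I) • g 1) = 0)) := by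
  have coefficient_continuousOn :
      ContinuousOn (fun t => (T : ℂ) • (A t).map (fun r => (r : ℂ))) (Icc 0 1) :=
    ((continuous_id.matrix_map continuous_ofReal).comp_continuousOn hA).const_smul (T : ℂ)
  have phase_mem_unitary :
      Complex.exp (-(θ : ℂ) * Complex.I) • (1 : Matrix (Fin n) (Fin n) ℂ) ∈
        unitaryGroup (Fin n) ℂ :=
    Unitary.smul_mem_of_mem (exp_neg_ofReal_mul_I_mem_unitary θ) (one_mem _)
  simpa only [floquetOperator, curvePairInner, conjTranspose_ofReal_smul_map_ofReal,
    neg_mulVec, sub_neg_eq_add, smul_mulVec, one_mulVec] using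
    kernel_orthogonality_floquet_complex_general zero_lt_one coefficient_continuousOn
      phase_mem_unitary hζ
end

section
/- Let r : [0,T] → ℝⁿ be continuous and let v₁, v₂, φ*, v₁*, v₂* : [0,T] → ℝⁿ be continuously differentiable T-periodic functions (each takes the same value at 0 and at T) satisfying on [0,T]: v̇₁ − A(τ) v₁ = r, v̇₂ − A(τ) v₂ + v₁ = 0, φ̇* + A(τ)ᵀ φ* = 0, v̇₁* + A(τ)ᵀ v₁* − φ* = 0, and v̇₂* + A(τ)ᵀ v₂* + v₁* = 0. If ∫₀ᵀ ⟨φ*(τ), v₂(τ)⟩ dτ = 1, then ∫₀ᵀ ⟨v₁*(τ), v₁(τ)⟩ dτ = 1 and ∫₀ᵀ ⟨v₂*(τ), r(τ)⟩ dτ = 1. -/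
open Matrix Set

/-!
Along two consecutive links of the chains, `v' = A v + q` and `w' = p - A* w`, the operator terms
cancel in `⟨w, v⟩' = ⟨p, v⟩ + ⟨w, q⟩`, so periodicity gives `∫ ⟨p, v⟩ = -∫ ⟨w, q⟩`. Applied to
`(v₁*, v₂)` and then to `(v₂*, v₁)`, this moves the normalization from one pair of eigenfunctions
to the next.
-/

open MeasureTheory

section Pairing

variable {E F G : Type*} [NormedAddCommGroup E] [NormedSpace ℝ E] [NormedAddCommGroup F]
  [NormedSpace ℝ F] [NormedAddCommGroup G] [NormedSpace ℝ G] {a b : ℝ}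

theorem intervalIntegrable_bilin_of_continuousOn (hab : a ≤ b) (B : E →L[ℝ] F →L[ℝ] G)
    {u : ℝ → E} {v : ℝ → F} (hu : ContinuousOn u (Icc a b)) (hv : ContinuousOn v (Icc a b)) :
    IntervalIntegrable (fun t ↦ B (u t) (v t)) volume a b :=
  ((B.continuous.comp_continuousOn hu).clm_apply hv).intervalIntegrable_of_Icc hab

variable [CompleteSpace G]

theorem integral_bilin_deriv_eq_sub (hab : a ≤ b) (B : E →L[ℝ] F →L[ℝ] G)
    {u u' : ℝ → E} {v v' : ℝ → F}
    (hu : ∀ t ∈ Icc a b, HasDerivWithinAt u (u' t) (Icc a b) t)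
    (hv : ∀ t ∈ Icc a b, HasDerivWithinAt v (v' t) (Icc a b) t)
    (hint : IntervalIntegrable (fun t ↦ B (u t) (v' t) + B (u' t) (v t)) volume a b) :
    ∫ t in a..b, B (u t) (v' t) + B (u' t) (v t) = B (u b) (v b) - B (u a) (v a) := by
  have hderiv : ∀ t ∈ Icc a b, HasDerivWithinAt (fun t ↦ B (u t) (v t))
      (B (u t) (v' t) + B (u' t) (v t)) (Icc a b) t :=
    fun t ht ↦ B.hasDerivWithinAt_of_bilinear (hu t ht) (hv t ht)
  exact intervalIntegral.integral_eq_sub_of_hasDerivAt_of_le hab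
    (HasDerivWithinAt.continuousOn hderiv)
    (fun t ht ↦ (hderiv t (Ioo_subset_Icc_self ht)).hasDerivAt (Icc_mem_nhds ht.1 ht.2)) hint

theorem integral_bilin_add_integral_bilin_eq_sub_of_adjoint (hab : a ≤ b)
    (B : E →L[ℝ] F →L[ℝ] G) {A : ℝ → F → F} {A' : ℝ → E → E}
    (hadj : ∀ t ∈ Icc a b, ∀ x y, B (A' t x) y = B x (A t y))
    {w p : ℝ → E} {v q : ℝ → F}
    (hw : ∀ t ∈ Icc a b, HasDerivWithinAt w (p t - A' t (w t)) (Icc a b) t)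
    (hv : ∀ t ∈ Icc a b, HasDerivWithinAt v (A t (v t) + q t) (Icc a b) t)
    (hp : IntervalIntegrable (fun t ↦ B (p t) (v t)) volume a b)
    (hq : IntervalIntegrable (fun t ↦ B (w t) (q t)) volume a b) :
    (∫ t in a..b, B (p t) (v t)) + ∫ t in a..b, B (w t) (q t) =
      B (w b) (v b) - B (w a) (v a) := by
  have hcancel : EqOn (fun t ↦ B (p t) (v t) + B (w t) (q t))
      (fun t ↦ B (w t) (A t (v t) + q t) + B (p t - A' t (w t)) (v t)) (uIcc a b) := by
    intro t ht
    rw [uIcc_of_le hab] at ht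
    simp only [map_add, map_sub, _root_.sub_apply, hadj t ht]
    abel
  rw [← intervalIntegral.integral_add hp hq, intervalIntegral.integral_congr hcancel]
  exact integral_bilin_deriv_eq_sub hab B hw hv
    ((intervalIntegrable_congr (hcancel.mono uIoc_subset_uIcc)).1 (hp.add hq))

theorem integral_bilin_add_integral_bilin_eq_zero_of_adjoint_of_periodic (hab : a ≤ b)
    (B : E →L[ℝ] F →L[ℝ] G) {A : ℝ → F → F} {A' : ℝ → E → E}
    (hadj : ∀ t ∈ Icc a b, ∀ x y, B (A' t x) y = B x (A t y))
    {w p : ℝ → E} {v q : ℝ → F}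
    (hw : DifferentiableOn ℝ w (Icc a b)) (hv : DifferentiableOn ℝ v (Icc a b))
    (hp : ContinuousOn p (Icc a b)) (hq : ContinuousOn q (Icc a b))
    (hwper : w b = w a) (hvper : v b = v a)
    (hweq : ∀ t ∈ Icc a b, derivWithin w (Icc a b) t + A' t (w t) = p t)
    (hveq : ∀ t ∈ Icc a b, derivWithin v (Icc a b) t - A t (v t) = q t) :
    (∫ t in a..b, B (p t) (v t)) + ∫ t in a..b, B (w t) (q t) = 0 := by
  have hw' : ∀ t ∈ Icc a b, HasDerivWithinAt w (p t - A' t (w t)) (Icc a b) t := fun t ht ↦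
    (hw t ht).hasDerivWithinAt.congr_deriv (eq_sub_of_add_eq (hweq t ht))
  have hv' : ∀ t ∈ Icc a b, HasDerivWithinAt v (A t (v t) + q t) (Icc a b) t := fun t ht ↦
    (hv t ht).hasDerivWithinAt.congr_deriv (sub_eq_iff_eq_add'.1 (hveq t ht))
  rw [integral_bilin_add_integral_bilin_eq_sub_of_adjoint hab B hadj hw' hv'
    (intervalIntegrable_bilin_of_continuousOn hab B hp hv.continuousOn)
    (intervalIntegrable_bilin_of_continuousOn hab B hw.continuousOn hq), hwper, hvper, sub_self]

theorem resonance11_normalizations_general (hab : a ≤ b) (B : E →L[ℝ] F →L[ℝ] G)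
    {A : ℝ → F → F} {A' : ℝ → E → E}
    (hadj : ∀ t ∈ Icc a b, ∀ x y, B (A' t x) y = B x (A t y))
    {r v₁ v₂ : ℝ → F} {φs v₁s v₂s : ℝ → E}
    (hr : ContinuousOn r (Icc a b)) (hφs : ContinuousOn φs (Icc a b))
    (hv₁ : DifferentiableOn ℝ v₁ (Icc a b)) (hv₂ : DifferentiableOn ℝ v₂ (Icc a b))
    (hv₁s : DifferentiableOn ℝ v₁s (Icc a b)) (hv₂s : DifferentiableOn ℝ v₂s (Icc a b))
    (hv₁per : v₁ b = v₁ a) (hv₂per : v₂ b = v₂ a)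
    (hv₁sper : v₁s b = v₁s a) (hv₂sper : v₂s b = v₂s a)
    (hv₁eq : ∀ t ∈ Icc a b, derivWithin v₁ (Icc a b) t - A t (v₁ t) = r t)
    (hv₂eq : ∀ t ∈ Icc a b, derivWithin v₂ (Icc a b) t - A t (v₂ t) + v₁ t = 0)
    (hv₁seq : ∀ t ∈ Icc a b, derivWithin v₁s (Icc a b) t + A' t (v₁s t) - φs t = 0)
    (hv₂seq : ∀ t ∈ Icc a b, derivWithin v₂s (Icc a b) t + A' t (v₂s t) + v₁s t = 0) :
    ∫ t in a..b, B (v₁s t) (v₁ t) = ∫ t in a..b, B (φs t) (v₂ t) ∧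
    ∫ t in a..b, B (v₂s t) (r t) = ∫ t in a..b, B (φs t) (v₂ t) := by
  have hφ : (∫ t in a..b, B (φs t) (v₂ t)) + ∫ t in a..b, B (v₁s t) (-v₁ t) = 0 :=
    integral_bilin_add_integral_bilin_eq_zero_of_adjoint_of_periodic hab B hadj hv₁s hv₂ hφs
      hv₁.continuousOn.neg hv₁sper hv₂per (fun t ht ↦ sub_eq_zero.1 (hv₁seq t ht))
      (fun t ht ↦ eq_neg_of_add_eq_zero_left (hv₂eq t ht))
  have hr₀ : (∫ t in a..b, B (-v₁s t) (v₁ t)) + ∫ t in a..b, B (v₂s t) (r t) = 0 :=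
    integral_bilin_add_integral_bilin_eq_zero_of_adjoint_of_periodic hab B hadj hv₂s hv₁
      hv₁s.continuousOn.neg hr hv₂sper hv₁per
      (fun t ht ↦ eq_neg_of_add_eq_zero_left (hv₂seq t ht)) hv₁eq
  simp only [map_neg, _root_.neg_apply, intervalIntegral.integral_neg] at hφ hr₀
  have hv₁_eq := (add_neg_eq_zero.1 hφ).symm
  exact ⟨hv₁_eq, (neg_add_eq_zero.1 hr₀).symm.trans hv₁_eq⟩

end Pairing

/-- At a 1:1 resonance of limit cycles: if `v̇₁ − A v₁ = r`, `v̇₂ − A v₂ + v₁ = 0`,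
`φ̇* + Aᵀ φ* = 0`, `v̇₁* + Aᵀ v₁* − φ* = 0`, `v̇₂* + Aᵀ v₂* + v₁* = 0`, all
`T`-periodic, and `∫₀ᵀ ⟨φ*, v₂⟩ = 1`, then `∫₀ᵀ ⟨v₁*, v₁⟩ = 1` and
`∫₀ᵀ ⟨v₂*, r⟩ = 1`. -/
theorem resonance11_normalizations (n : ℕ) (T : ℝ) (hT : 0 < T)
    (A : ℝ → Matrix (Fin n) (Fin n) ℝ) (hA : ContinuousOn A (Icc 0 T))
    (r : ℝ → Fin n → ℝ) (hr : ContinuousOn r (Icc 0 T))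
    (v₁ v₂ φs v₁s v₂s : ℝ → Fin n → ℝ)
    (hv₁ : ContDiffOn ℝ 1 v₁ (Icc 0 T)) (hv₂ : ContDiffOn ℝ 1 v₂ (Icc 0 T))
    (hφs : ContDiffOn ℝ 1 φs (Icc 0 T)) (hv₁s : ContDiffOn ℝ 1 v₁s (Icc 0 T))
    (hv₂s : ContDiffOn ℝ 1 v₂s (Icc 0 T))
    (hv₁per : v₁ T = v₁ 0) (hv₂per : v₂ T = v₂ 0) (hφper : φs T = φs 0)
    (hv₁sper : v₁s T = v₁s 0) (hv₂sper : v₂s T = v₂s 0)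
    (hv₁eq : ∀ τ ∈ Icc (0:ℝ) T, derivWithin v₁ (Icc 0 T) τ - A τ *ᵥ v₁ τ = r τ)
    (hv₂eq : ∀ τ ∈ Icc (0:ℝ) T,
      derivWithin v₂ (Icc 0 T) τ - A τ *ᵥ v₂ τ + v₁ τ = 0)
    (hφeq : ∀ τ ∈ Icc (0:ℝ) T, derivWithin φs (Icc 0 T) τ + (A τ)ᵀ *ᵥ φs τ = 0)
    (hv₁seq : ∀ τ ∈ Icc (0:ℝ) T,
      derivWithin v₁s (Icc 0 T) τ + (A τ)ᵀ *ᵥ v₁s τ - φs τ = 0)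
    (hv₂seq : ∀ τ ∈ Icc (0:ℝ) T,
      derivWithin v₂s (Icc 0 T) τ + (A τ)ᵀ *ᵥ v₂s τ + v₁s τ = 0)
    (hnorm : (∫ τ in (0:ℝ)..T, φs τ ⬝ᵥ v₂ τ) = 1) :
    (∫ τ in (0:ℝ)..T, v₁s τ ⬝ᵥ v₁ τ) = 1 ∧
    (∫ τ in (0:ℝ)..T, v₂s τ ⬝ᵥ r τ) = 1 :=
  hnorm ▸ resonance11_normalizations_general hT.le
    (dotProductBilin ℝ ℝ (m := Fin n) (A := ℝ)).toContinuousBilinearMap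
    (fun τ _ x y ↦ (dotProduct_comm _ _).trans (dotProduct_transpose_mulVec (A τ) y x))
    hr hφs.continuousOn
    (hv₁.differentiableOn one_ne_zero) (hv₂.differentiableOn one_ne_zero)
    (hv₁s.differentiableOn one_ne_zero) (hv₂s.differentiableOn one_ne_zero)
    hv₁per hv₂per hv₁sper hv₂sper hv₁eq hv₂eq hv₁seq hv₂seq
end

section
/- Let φ*, v : [0,T] → ℝⁿ be continuous functions and assume the vanishing of the fold normal form coefficient, i.e. ∫₀ᵀ ⟨φ*(τ), B(τ; v(τ), v(τ)) + 2 A(τ) v(τ)⟩ dτ = 0. For α ∈ ℝ and a continuous function h : [0,T] → ℝⁿ, define c(α, h) = (1/6) ∫₀ᵀ ⟨φ*(τ), −6α A(τ) v(τ) + 3 A(τ) h(τ) + 3 B(τ; v(τ), v(τ)) + 6 A(τ) v(τ) + 3 B(τ; h(τ), v(τ)) + C(τ; v(τ), v(τ), v(τ))⟩ dτ. Then for all α₁, α₂ ∈ ℝ and every continuous h, c(α₂, h − 2(α₂ − α₁) v) = c(α₁, h); i.e. the cusp-of-cycles normal form coefficient c is independent of the choice of the time-reparametrization coefficient α₁.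 -/
open Matrix Set

/-- The cusp-of-cycles normal form coefficient
`c(α, h) = (1/6) ∫₀ᵀ ⟨φ*, −6α A v + 3 A h + 3 B(v,v) + 6 A v + 3 B(h,v) + C(v,v,v)⟩ dτ`. -/
noncomputable def cuspCoeff (n : ℕ) (T : ℝ)
    (A : ℝ → Matrix (Fin n) (Fin n) ℝ)
    (B : ℝ → (Fin n → ℝ) →ₗ[ℝ] (Fin n → ℝ) →ₗ[ℝ] (Fin n → ℝ))
    (C3 : ℝ → (Fin n → ℝ) →ₗ[ℝ] (Fin n → ℝ) →ₗ[ℝ] (Fin n → ℝ) →ₗ[ℝ] (Fin n → ℝ))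
    (φs v : ℝ → Fin n → ℝ) (α : ℝ) (h : ℝ → Fin n → ℝ) : ℝ :=
  (1/6) * ∫ τ in (0:ℝ)..T,
    φs τ ⬝ᵥ ((-(6*α)) • (A τ *ᵥ v τ) + (3:ℝ) • (A τ *ᵥ h τ)
      + (3:ℝ) • (B τ (v τ) (v τ)) + (6:ℝ) • (A τ *ᵥ v τ)
      + (3:ℝ) • (B τ (h τ) (v τ)) + C3 τ (v τ) (v τ) (v τ))

/-! The shift `(α₁, h) ↦ (α₂, h − 2(α₂ − α₁) v)` changes only the terms of the cusp integrand that
involve `α` or `h`. Collecting them, the integrand changes pointwise by `−6(α₂ − α₁)` times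
`⟨φ*, B(v,v) + 2 A v⟩`, whose integral is the vanishing fold coefficient up to a factor. -/

section ContinuousFamilies

variable {X 𝕜 E F G H : Type*} [TopologicalSpace X] [NontriviallyNormedField 𝕜] [CompleteSpace 𝕜]
  [NormedAddCommGroup E] [NormedSpace 𝕜 E] [FiniteDimensional 𝕜 E]
  [NormedAddCommGroup F] [NormedSpace 𝕜 F]
  [NormedAddCommGroup G] [NormedSpace 𝕜 G]
  [NormedAddCommGroup H] [NormedSpace 𝕜 H] {s : Set X}

theorem continuousOn_linearMap_apply {L : X → E →ₗ[𝕜] F} {u : X → E}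
    (hL : ∀ x, ContinuousOn (fun τ ↦ L τ x) s) (hu : ContinuousOn u s) :
    ContinuousOn (fun τ ↦ L τ (u τ)) s :=
  (continuousOn_clm_apply (f := fun τ ↦ (L τ).toContinuousLinearMap).2 hL).clm_apply hu

variable [FiniteDimensional 𝕜 F]

theorem continuousOn_linearMap_apply₂ {B : X → E →ₗ[𝕜] F →ₗ[𝕜] G} {u : X → E} {w : X → F}
    (hB : ∀ x y, ContinuousOn (fun τ ↦ B τ x y) s) (hu : ContinuousOn u s)
    (hw : ContinuousOn w s) :
    ContinuousOn (fun τ ↦ B τ (u τ) (w τ)) s :=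
  continuousOn_linearMap_apply (L := fun τ ↦ (B τ).flip (w τ))
    (fun x ↦ continuousOn_linearMap_apply (L := fun τ ↦ B τ x) (hB x) hw) hu

theorem continuousOn_linearMap_apply₃ [FiniteDimensional 𝕜 G]
    {C : X → E →ₗ[𝕜] F →ₗ[𝕜] G →ₗ[𝕜] H} {u : X → E} {w : X → F} {z : X → G}
    (hC : ∀ x y z, ContinuousOn (fun τ ↦ C τ x y z) s) (hu : ContinuousOn u s)
    (hw : ContinuousOn w s) (hz : ContinuousOn z s) :
    ContinuousOn (fun τ ↦ C τ (u τ) (w τ) (z τ)) s :=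
  continuousOn_linearMap_apply (L := fun τ ↦ ((C τ).flip (w τ)).flip (z τ))
    (fun x ↦ continuousOn_linearMap_apply₂ (B := fun τ ↦ C τ x) (hC x) hw hz) hu

end ContinuousFamilies

section Integrands

variable {R E : Type*} [CommRing R] [AddCommGroup E] [Module R E]

/-- The integrand `⟨φ*, B(v,v) + 2 A v⟩` of the fold normal form coefficient at a point of the
cycle, without the factor `1/2`. The linear functional `φ` stands for `⟨φ*, ·⟩`. -/
def foldIntegrand (φ : Module.Dual R E) (A : E →ₗ[R] E) (B : E →ₗ[R] E →ₗ[R] E) (v : E) : R :=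
  φ (B v v + (2 : R) • A v)

/-- The integrand `⟨φ*, −6α A v + 3 A h + 3 B(v,v) + 6 A v + 3 B(h,v) + C(v,v,v)⟩` of the cusp
normal form coefficient at a point of the cycle, without the factor `1/6`. The linear functional
`φ` stands for `⟨φ*, ·⟩`. -/
def cuspIntegrand (φ : Module.Dual R E) (A : E →ₗ[R] E) (B : E →ₗ[R] E →ₗ[R] E)
    (C : E →ₗ[R] E →ₗ[R] E →ₗ[R] E) (v : E) (α : R) (h : E) : R :=
  φ (-(6 * α) • A v + (3 : R) • A h + (3 : R) • B v v + (6 : R) • A v + (3 : R) • B h v + C v v v)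

theorem cuspIntegrand_sub_smul (φ : Module.Dual R E) (A : E →ₗ[R] E) (B : E →ₗ[R] E →ₗ[R] E)
    (C : E →ₗ[R] E →ₗ[R] E →ₗ[R] E) (v h : E) (α₁ α₂ : R) :
    cuspIntegrand φ A B C v α₂ (h - (2 * (α₂ - α₁)) • v) =
      cuspIntegrand φ A B C v α₁ h - 6 * (α₂ - α₁) * foldIntegrand φ A B v := by
  simp only [cuspIntegrand, foldIntegrand, map_add, map_sub, map_smul, LinearMap.sub_apply,
    LinearMap.smul_apply, smul_eq_mul]
  ring

end Integrands

section ContinuousIntegrands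

variable {X 𝕜 E : Type*} [TopologicalSpace X] [NontriviallyNormedField 𝕜] [CompleteSpace 𝕜]
  [NormedAddCommGroup E] [NormedSpace 𝕜 E] [FiniteDimensional 𝕜 E] {s : Set X}
  {φ : X → Module.Dual 𝕜 E} {A : X → E →ₗ[𝕜] E} {B : X → E →ₗ[𝕜] E →ₗ[𝕜] E} {v : X → E}

theorem continuousOn_foldIntegrand (hφ : ∀ x, ContinuousOn (fun τ ↦ φ τ x) s)
    (hA : ∀ x, ContinuousOn (fun τ ↦ A τ x) s) (hB : ∀ x y, ContinuousOn (fun τ ↦ B τ x y) s)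
    (hv : ContinuousOn v s) :
    ContinuousOn (fun τ ↦ foldIntegrand (φ τ) (A τ) (B τ) (v τ)) s :=
  continuousOn_linearMap_apply hφ <| (continuousOn_linearMap_apply₂ hB hv hv).add <|
    (continuousOn_linearMap_apply hA hv).const_smul _

theorem continuousOn_cuspIntegrand {C : X → E →ₗ[𝕜] E →ₗ[𝕜] E →ₗ[𝕜] E} {h : X → E}
    (hφ : ∀ x, ContinuousOn (fun τ ↦ φ τ x) s) (hA : ∀ x, ContinuousOn (fun τ ↦ A τ x) s)
    (hB : ∀ x y, ContinuousOn (fun τ ↦ B τ x y) s)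
    (hC : ∀ x y z, ContinuousOn (fun τ ↦ C τ x y z) s)
    (hv : ContinuousOn v s) (α : 𝕜) (hh : ContinuousOn h s) :
    ContinuousOn (fun τ ↦ cuspIntegrand (φ τ) (A τ) (B τ) (C τ) (v τ) α (h τ)) s := by
  have hAv := continuousOn_linearMap_apply hA hv
  have hAh := continuousOn_linearMap_apply hA hh
  have hBvv := continuousOn_linearMap_apply₂ hB hv hv
  have hBhv := continuousOn_linearMap_apply₂ hB hh hv
  have hCvvv := continuousOn_linearMap_apply₃ hC hv hv hv
  exact continuousOn_linearMap_apply hφ <|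
    (((((hAv.const_smul _).add (hAh.const_smul _)).add (hBvv.const_smul _)).add
      (hAv.const_smul _)).add (hBhv.const_smul _)).add hCvvv

end ContinuousIntegrands

section MatrixFamilies

variable {X R m n : Type*} [TopologicalSpace X] [CommSemiring R] [TopologicalSpace R]
  [ContinuousAdd R] [ContinuousMul R] [Fintype n] {s : Set X}

theorem continuousOn_dotProductBilin_apply {φ : X → n → R} (hφ : ContinuousOn φ s) (x : n → R) :
    ContinuousOn (fun τ ↦ dotProductBilin R R (φ τ) x) s :=
  (continuous_id.dotProduct continuous_const).comp_continuousOn hφ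

theorem continuousOn_mulVecLin_apply {A : X → Matrix m n R} (hA : ContinuousOn A s) (x : n → R) :
    ContinuousOn (fun τ ↦ (A τ).mulVecLin x) s :=
  (continuous_id.matrix_mulVec continuous_const).comp_continuousOn hA

end MatrixFamilies

theorem cuspCoeff_eq_integral_cuspIntegrand {n : ℕ} {T : ℝ} (hT : 0 ≤ T)
    (A : ℝ → Matrix (Fin n) (Fin n) ℝ)
    (B : ℝ → (Fin n → ℝ) →ₗ[ℝ] (Fin n → ℝ) →ₗ[ℝ] (Fin n → ℝ))
    (C : ℝ → (Fin n → ℝ) →ₗ[ℝ] (Fin n → ℝ) →ₗ[ℝ] (Fin n → ℝ) →ₗ[ℝ] (Fin n → ℝ))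
    (φ v : ℝ → Fin n → ℝ) (α : ℝ) (h : ℝ → Fin n → ℝ) :
    cuspCoeff n T A B C φ v α h = 1 / 6 * ∫ τ in Icc 0 T,
      cuspIntegrand (dotProductBilin ℝ ℝ (φ τ)) (A τ).mulVecLin (B τ) (C τ) (v τ) α (h τ) := by
  rw [cuspCoeff, intervalIntegral.integral_of_le hT, ← MeasureTheory.integral_Icc_eq_integral_Ioc]
  rfl

open MeasureTheory in
theorem cusp_coefficient_independent_of_alpha_general {X 𝕜 E : Type*} [MeasurableSpace X]
    {μ : Measure X} [RCLike 𝕜] [AddCommGroup E] [Module 𝕜 E]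
    {φ : X → Module.Dual 𝕜 E} {A : X → E →ₗ[𝕜] E} {B : X → E →ₗ[𝕜] E →ₗ[𝕜] E}
    {C : X → E →ₗ[𝕜] E →ₗ[𝕜] E →ₗ[𝕜] E} {v h : X → E} {α₁ : 𝕜} (α₂ : 𝕜)
    (hfold_int : Integrable (fun τ ↦ foldIntegrand (φ τ) (A τ) (B τ) (v τ)) μ)
    (hfold : ∫ τ, foldIntegrand (φ τ) (A τ) (B τ) (v τ) ∂μ = 0)
    (hcusp_int : Integrable (fun τ ↦ cuspIntegrand (φ τ) (A τ) (B τ) (C τ) (v τ) α₁ (h τ)) μ) :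
    ∫ τ, cuspIntegrand (φ τ) (A τ) (B τ) (C τ) (v τ) α₂ (h τ - (2 * (α₂ - α₁)) • v τ) ∂μ =
      ∫ τ, cuspIntegrand (φ τ) (A τ) (B τ) (C τ) (v τ) α₁ (h τ) ∂μ := by
  simp only [cuspIntegrand_sub_smul]
  rw [integral_sub hcusp_int (hfold_int.const_mul _), integral_const_mul, hfold, mul_zero, sub_zero]

/-- At a cusp-of-cycles point (where the fold coefficient
`b = (1/2)∫₀ᵀ ⟨φ*, B(v,v) + 2 A v⟩ dτ` vanishes), the cusp normal form
coefficient `c` does not depend on the choice of the time-reparametrization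
coefficient `α₁`: replacing `(α₁, h)` by `(α₂, h − 2(α₂ − α₁) v)` yields the
same value of `c`. -/
theorem cusp_coefficient_independent_of_alpha (n : ℕ) (T : ℝ) (hT : 0 < T)
    (A : ℝ → Matrix (Fin n) (Fin n) ℝ) (hA : ContinuousOn A (Icc 0 T))
    (B : ℝ → (Fin n → ℝ) →ₗ[ℝ] (Fin n → ℝ) →ₗ[ℝ] (Fin n → ℝ))
    (hB : ∀ x y, ContinuousOn (fun τ => B τ x y) (Icc 0 T))
    (hBsymm : ∀ τ x y, B τ x y = B τ y x)
    (C3 : ℝ → (Fin n → ℝ) →ₗ[ℝ] (Fin n → ℝ) →ₗ[ℝ] (Fin n → ℝ) →ₗ[ℝ] (Fin n → ℝ))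
    (hC : ∀ x y z, ContinuousOn (fun τ => C3 τ x y z) (Icc 0 T))
    (hCsymm : ∀ τ x y z, C3 τ x y z = C3 τ y x z ∧ C3 τ x y z = C3 τ x z y)
    (φs v : ℝ → Fin n → ℝ)
    (hφs : ContinuousOn φs (Icc 0 T)) (hv : ContinuousOn v (Icc 0 T))
    (hfold : (∫ τ in (0:ℝ)..T,
      φs τ ⬝ᵥ (B τ (v τ) (v τ) + (2:ℝ) • (A τ *ᵥ v τ))) = 0) :
    ∀ (α₁ α₂ : ℝ) (h : ℝ → Fin n → ℝ), ContinuousOn h (Icc 0 T) →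
      cuspCoeff n T A B C3 φs v α₂ (fun τ => h τ - (2*(α₂ - α₁)) • v τ)
        = cuspCoeff n T A B C3 φs v α₁ h := by
  intro α₁ α₂ h hh
  have hφ_apply := continuousOn_dotProductBilin_apply hφs
  have hA_apply := continuousOn_mulVecLin_apply hA
  rw [intervalIntegral.integral_of_le hT.le, ← MeasureTheory.integral_Icc_eq_integral_Ioc] at hfold
  rw [cuspCoeff_eq_integral_cuspIntegrand hT.le, cuspCoeff_eq_integral_cuspIntegrand hT.le,
    cusp_coefficient_independent_of_alpha_general α₂
      (continuousOn_foldIntegrand hφ_apply hA_apply hB hv).integrableOn_Icc hfold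
      (continuousOn_cuspIntegrand hφ_apply hA_apply hB hC hv α₁ hh).integrableOn_Icc]
end
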